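/- For every integer k ≥ 2, there exists a standard Borel space X with a nonatomic σ-finite Borel measure μ satisfying μ(X) = ∞, and an invertible measure-preserving transformation T : X → X, such that the k-fold Cartesian product of T is conservative but not ergodic, while T itself is conservative and ergodic. -/

import Mathlib

/-!
The example is an adding machine in base 4, the same one for every `k`, carrying an infinite measure
concentrated on sequences whose digits are eventually "middle" digits.

A base-4 digit is encoded by two bits `(c, s)` through the Gray code
`0 = (0,1)`, `1 = (0,0)`, `2 = (1,0)`, `3 = (1,1)`, and the space is
`X = (ℤ/2)^ℕ × ⨁_ℕ ℤ/2`: the bits `c` are arbitrary and `s` has finite support, so that all but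
finitely many digits are `1` or `2`. In particular no point of `X` is eventually `3` or eventually
`0`, so "add one with carry" is an everywhere defined bijection `T` of `X`. The measure `μ` is Haar
measure on the noncompact locally compact group `X`, namely Haar measure times counting measure.
It is σ-finite, nonatomic and infinite, and `T` preserves it because `T` is bijective and is
piecewise, on countably many pieces, a translation (`measurePreserving_T`).

* `T^(4^n)` is the adding machine acting on the digits from `n` on (`odo_zero_iterate`).
* Ergodicity (`isErgodicMap_T`): by the previous point, an invariant set does not change when finitely
  many digits are modified. It is therefore of the form `B₀ × ⨁ ℤ/2` with `B₀` invariant under a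
  dense subgroup of the compact group `(ℤ/2)^ℕ`, so `B₀` is null or conull.
* Conservativity of all powers (`isConservativeMap_pi`): where all `k` digits at place `n` are `1`,
  the `4^n`-th iterate is the translation flipping the `n`-th bits `c`. Such flips tend to the
  identity, so for large `n` the set of points of `A` that remain in `A` under every choice of flips
  at place `n` in the `k` coordinates has positive measure. A suitable flip moves a positive part of
  it to where all these digits are `1`.
* Non-ergodicity for `k ≥ 2` (`not_isErgodicMap_pi`): `T` reverses the parity of the `0`-th digit, so
  equality of the parities in two coordinates defines an invariant clopen set, which is neither
  null nor conull.
-/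


open MeasureTheory

/-- `T` is *conservative* w.r.t. `μ`: for every measurable set `A` of positive measure
there is a positive integer `n` with `μ (T⁻ⁿ A ∩ A) > 0`. -/
def IsConservativeMap {X : Type*} [MeasurableSpace X] (μ : Measure X) (T : X → X) : Prop :=
  ∀ A : Set X, MeasurableSet A → 0 < μ A →
    ∃ n : ℕ, 0 < n ∧ 0 < μ (T^[n] ⁻¹' A ∩ A)

/-- `T` is *ergodic* w.r.t. `μ`: every measurable set `A` with `T⁻¹ A = A` mod `μ`
is null or conull. -/
def IsErgodicMap {X : Type*} [MeasurableSpace X] (μ : Measure X) (T : X → X) : Prop :=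
  ∀ A : Set X, MeasurableSet A → μ (symmDiff (T ⁻¹' A) A) = 0 →
    μ A = 0 ∨ μ Aᶜ = 0

namespace GrayOdometer

open Filter Topology Set

/-! ### The phase space and the carry position -/

/-- The compact group `(ℤ/2)^ℕ` of first bits. -/
abbrev C := ℕ → ZMod 2

/-- The countable group of finitely supported second bits, given the discrete topology. -/
abbrev S := ℕ →₀ ZMod 2

instance : TopologicalSpace S := ⊥
instance : DiscreteTopology S := ⟨rfl⟩
instance : MeasurableSpace S := ⊤
instance : DiscreteMeasurableSpace S := ⟨fun _ => trivial⟩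
instance : SecondCountableTopology S := inferInstance

/-- The phase space. The `n`-th base-4 digit of `x` is the pair `(x.1 n, x.2 n)`, read through the
Gray code `0 = (0,1)`, `1 = (0,0)`, `2 = (1,0)`, `3 = (1,1)`. -/
abbrev X := C × S

lemma X_ext {x y : X} (h1 : ∀ i, x.1 i = y.1 i) (h2 : ∀ i, x.2 i = y.2 i) : x = y :=
  Prod.ext (funext h1) (Finsupp.ext h2)

lemma zmod2_cases (a : ZMod 2) : a = 0 ∨ a = 1 := by revert a; decide

lemma add_self' (a : ZMod 2) : a + a = 0 := by revert a; decide

/-- The `n`-th digit of `x` is `3`. -/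
def IsTop (n : ℕ) (x : X) : Prop := x.1 n = 1 ∧ x.2 n = 1

instance (n : ℕ) (x : X) : Decidable (IsTop n x) := by unfold IsTop; infer_instance

lemma exists_not_isTop (n : ℕ) (x : X) : ∃ j, n ≤ j ∧ ¬ IsTop j x := by
  obtain ⟨j, hj⟩ := Infinite.exists_notMem_finset (x.2.support ∪ Finset.range n)
  simp only [Finset.mem_union, Finsupp.mem_support_iff, Finset.mem_range, not_or, not_not,
    not_lt] at hj
  exact ⟨j, hj.2, fun h => by simpa [hj.1] using h.2⟩

/-- The place where the carry stops when one unit is added at place `n`: the first `j ≥ n` whose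
digit is not `3`. -/
def J (n : ℕ) (x : X) : ℕ := Nat.find (exists_not_isTop n x)

lemma le_J (n : ℕ) (x : X) : n ≤ J n x := (Nat.find_spec (exists_not_isTop n x)).1

lemma not_isTop_J (n : ℕ) (x : X) : ¬ IsTop (J n x) x :=
  (Nat.find_spec (exists_not_isTop n x)).2

lemma isTop_of_lt_J {n i : ℕ} {x : X} (h1 : n ≤ i) (h2 : i < J n x) : IsTop i x := by
  by_contra h
  exact Nat.find_min (exists_not_isTop n x) h2 ⟨h1, h⟩

lemma J_eq {n j : ℕ} {x : X} (h1 : n ≤ j) (h2 : ¬ IsTop j x)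
    (h3 : ∀ i, n ≤ i → i < j → IsTop i x) : J n x = j := by
  refine (Nat.find_eq_iff _).2 ⟨⟨h1, h2⟩, fun i hi h => h.2 (h3 i h.1 hi)⟩

/-! ### The adding machine and its powers -/

/-- The translation that performs the addition of one unit at place `n` when the carry stops at `j`
and the bits of the digit at `j` sum to `b`. In the Gray code, `3 ↦ 0` and `1 ↦ 2` flip the first bit,
while `0 ↦ 1` and `2 ↦ 3` flip the second one; the sum of the bits distinguishes the cases at `j`. -/
noncomputable def step (n j : ℕ) (b : ZMod 2) : X :=
  (fun i => if i = j then 1 + b else if n ≤ i ∧ i < j then 1 else 0, Finsupp.single j b)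

/-- The adding machine on the digits from `n` on, which adds one unit at place `n` with carry. -/
noncomputable def odo (n : ℕ) (x : X) : X :=
  x + step n (J n x) (x.1 (J n x) + x.2 (J n x))

/-- Cyclic increment of the `n`-th digit, without carry. On bits it is `(c, s) ↦ (1 + s, c)`. -/
noncomputable def inc (n : ℕ) (x : X) : X := x + step n n (x.1 n + x.2 n)

lemma odo_fst (n : ℕ) (x : X) (i : ℕ) : (odo n x).1 i =
    if i = J n x then 1 + x.2 i else if n ≤ i ∧ i < J n x then x.1 i + 1 else x.1 i := by
  simp only [odo, step, Prod.fst_add, Pi.add_apply]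
  split_ifs with h1 h2
  · subst h1
    generalize x.1 (J n x) = a
    generalize x.2 (J n x) = b
    revert a b; decide
  · rfl
  · simp

lemma odo_snd (n : ℕ) (x : X) (i : ℕ) : (odo n x).2 i = if i = J n x then x.1 i else x.2 i := by
  simp only [odo, step, Prod.snd_add, Finsupp.add_apply, Finsupp.single_apply]
  split_ifs with h1 h2 h2
  · subst h1
    generalize x.1 (J n x) = a
    generalize x.2 (J n x) = b
    revert a b; decide
  · exact absurd h1.symm h2
  · exact absurd h2.symm h1
  · simp

lemma inc_fst (n : ℕ) (x : X) (i : ℕ) :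
    (inc n x).1 i = if i = n then 1 + x.2 i else x.1 i := by
  simp only [inc, step, Prod.fst_add, Pi.add_apply]
  split_ifs with h1 h2
  · subst h1
    generalize x.1 i = a
    generalize x.2 i = b
    revert a b; decide
  · omega
  · simp

lemma inc_snd (n : ℕ) (x : X) (i : ℕ) : (inc n x).2 i = if i = n then x.1 i else x.2 i := by
  simp only [inc, step, Prod.snd_add, Finsupp.add_apply, Finsupp.single_apply]
  split_ifs with h1 h2 h2
  · subst h1
    generalize x.1 n = a
    generalize x.2 n = b
    revert a b; decide
  · exact absurd h1.symm h2
  · exact absurd h2.symm h1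
  · simp

lemma odo_of_not_isTop {n : ℕ} {x : X} (h : ¬ IsTop n x) : odo n x = inc n x := by
  have hJ : J n x = n := J_eq le_rfl h (fun i h1 h2 => by omega)
  rw [odo, inc, hJ]

lemma odo_of_isTop {n : ℕ} {x : X} (h : IsTop n x) : odo n x = inc n (odo (n + 1) x) := by
  have hJ : J n x = J (n + 1) x := by
    refine J_eq ((Nat.le_succ n).trans (le_J _ _)) (not_isTop_J _ _) fun i h1 h2 => ?_
    rcases h1.eq_or_lt with rfl | h1
    · exact h
    · exact isTop_of_lt_J h1 h2
  have hn := le_J (n + 1) x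
  obtain ⟨hc, hs⟩ := h
  refine X_ext (fun i => ?_) (fun i => ?_)
  · rw [inc_fst, odo_fst, odo_fst, odo_snd, hJ]
    by_cases hi : i = n
    · subst hi
      have : i ≠ J (i + 1) x := by omega
      have h2 : i ≤ i ∧ i < J (i + 1) x := by omega
      simp [this, h2, hc, hs]
    · have : (n ≤ i) ↔ (n + 1 ≤ i) := by omega
      simp [hi, this]
  · rw [inc_snd, odo_fst, odo_snd, odo_snd, hJ]
    by_cases hi : i = n
    · subst hi
      have : i ≠ J (i + 1) x := by omega
      simp [this, hc, hs]
    · simp [hi]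

lemma isTop_inc_of_ne {n i : ℕ} (h : i ≠ n) (x : X) : IsTop i (inc n x) ↔ IsTop i x := by
  simp [IsTop, inc_fst, inc_snd, h]

lemma odo_succ_inc (n : ℕ) (x : X) : odo (n + 1) (inc n x) = inc n (odo (n + 1) x) := by
  have hJ : J (n + 1) (inc n x) = J (n + 1) x := by
    refine J_eq (le_J _ _) ?_ fun i h1 h2 => ?_
    · rw [isTop_inc_of_ne (by have := le_J (n + 1) x; omega)]
      exact not_isTop_J _ _
    · rw [isTop_inc_of_ne (by omega)]
      exact isTop_of_lt_J h1 h2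
  have hn := le_J (n + 1) x
  refine X_ext (fun i => ?_) (fun i => ?_)
  · rw [inc_fst, odo_fst, odo_fst, odo_snd, hJ, inc_fst, inc_snd]
    by_cases hi : i = n
    · subst hi
      have : i ≠ J (i + 1) x := by omega
      simp [this]
    · simp [hi]
  · rw [inc_snd, odo_fst, odo_snd, odo_snd, hJ, inc_fst, inc_snd]
    by_cases hi : i = n
    · subst hi
      have : i ≠ J (i + 1) x := by omega
      simp [this]
    · simp [hi]

lemma inc_four (n : ℕ) (x : X) : inc n (inc n (inc n (inc n x))) = x := by
  refine X_ext (fun i => ?_) (fun i => ?_)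
  · simp only [inc_fst, inc_snd]
    split_ifs
    · generalize x.1 i = a
      revert a; decide
    · rfl
  · simp only [inc_fst, inc_snd]
    split_ifs
    · generalize x.2 i = a
      revert a; decide
    · rfl

lemma isTop_odo_succ (n : ℕ) (x : X) : IsTop n (odo (n + 1) x) ↔ IsTop n x := by
  have hn := le_J (n + 1) x
  have h1 : n ≠ J (n + 1) x := by omega
  simp [IsTop, odo_fst, odo_snd, h1]

/-- Four increments bring the `n`-th digit back and produce exactly one carry. -/
lemma odo_iterate_four (n : ℕ) (x : X) : (odo n)^[4] x = odo (n + 1) x := by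
  have key : ∀ y, odo n y = if IsTop n y then inc n (odo (n + 1) y) else inc n y := by
    intro y
    split_ifs with h
    · exact odo_of_isTop h
    · exact odo_of_not_isTop h
  have e : ∀ y, IsTop n y ↔ (y.1 n = 1 ∧ y.2 n = 1) := fun y => Iff.rfl
  show odo n (odo n (odo n (odo n x))) = _
  have t0 := e x
  have t1 : IsTop n (inc n x) ↔ (1 + x.2 n = 1 ∧ x.1 n = 1) := by simp [IsTop, inc_fst, inc_snd]
  have t2 : IsTop n (inc n (inc n x)) ↔ (1 + x.1 n = 1 ∧ 1 + x.2 n = 1) := by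
    simp [IsTop, inc_fst, inc_snd]
  have t3 : IsTop n (inc n (inc n (inc n x))) ↔
      (1 + (1 + x.2 n) = 1 ∧ 1 + x.1 n = 1) := by
    simp [IsTop, inc_fst, inc_snd]
  have q : (2 : ZMod 2) = 0 := rfl
  have q1 : (1 + 1 : ZMod 2) = 0 := rfl
  rcases zmod2_cases (x.1 n) with h1 | h1 <;> rcases zmod2_cases (x.2 n) with h2 | h2 <;>
    simp [h1, h2, q1] at t0 t1 t2 t3 <;>
    simp [key, t0, t1, t2, t3, ← odo_succ_inc, isTop_odo_succ, inc_four]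

lemma odo_zero_iterate (n : ℕ) : (odo 0)^[4 ^ n] = odo n := by
  induction n with
  | zero => rfl
  | succ n ih =>
    rw [pow_succ, Function.iterate_mul, ih]
    exact funext (odo_iterate_four n)

/-! ### `T` as a measurable equivalence -/

/-- The involution `d ↦ 3 - d` on every digit. It conjugates the adding machine to its inverse. -/
noncomputable def reflect (x : X) : X := (x.1 + 1, x.2)

lemma reflect_reflect (x : X) : reflect (reflect x) = x :=
  X_ext (fun i => by
    show x.1 i + 1 + 1 = x.1 i
    generalize x.1 i = a
    revert a; decide) (fun i => rfl)

lemma J_reflect_odo (x : X) : J 0 (reflect (odo 0 x)) = J 0 x := by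
  refine J_eq (Nat.zero_le _) ?_ fun i _ h2 => ?_
  · have h := not_isTop_J 0 x
    simp only [IsTop, reflect, Pi.add_apply, odo_fst, odo_snd, Pi.one_apply, if_true] at h ⊢
    revert h
    generalize x.1 (J 0 x) = a
    generalize x.2 (J 0 x) = b
    revert a b; decide
  · have h := isTop_of_lt_J (Nat.zero_le i) h2
    simp only [IsTop, reflect, Pi.add_apply, odo_fst, odo_snd, Pi.one_apply, h2.ne, h2,
      Nat.zero_le, if_true, if_false, and_self] at h ⊢
    rw [h.1, h.2]
    decide

lemma reflect_odo_reflect_odo (x : X) : reflect (odo 0 (reflect (odo 0 x))) = x := by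
  have hJ := J_reflect_odo x
  refine X_ext (fun i => ?_) (fun i => ?_)
  · show (odo 0 (reflect (odo 0 x))).1 i + 1 = x.1 i
    rw [odo_fst, hJ]
    simp only [reflect, Pi.add_apply, Pi.one_apply, odo_fst, odo_snd]
    generalize x.1 i = a
    generalize x.2 i = b
    split_ifs <;> revert a b <;> decide
  · show (odo 0 (reflect (odo 0 x))).2 i = x.2 i
    rw [odo_snd, hJ]
    simp only [reflect, Pi.add_apply, Pi.one_apply, odo_fst, odo_snd]
    generalize x.1 i = a
    generalize x.2 i = b
    split_ifs <;> revert a b <;> decide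

lemma odo_reflect_odo_reflect (x : X) : odo 0 (reflect (odo 0 (reflect x))) = x := by
  have h := reflect_odo_reflect_odo (reflect x)
  have := congrArg reflect h
  rwa [reflect_reflect, reflect_reflect] at this

lemma measurable_digits : Measurable (fun p : ℕ × X => (p.2.1 p.1, p.2.2 p.1)) := by
  refine measurable_from_prod_countable_right fun n => ?_
  exact ((measurable_pi_apply n).comp measurable_fst).prodMk
    ((measurable_of_countable (fun s : S => s n)).comp measurable_snd)

lemma measurableSet_isTop (n : ℕ) : MeasurableSet {x : X | IsTop n x} := by
  have h : Measurable (fun x : X => (x.1 n, x.2 n)) :=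
    measurable_digits.comp (measurable_const.prodMk measurable_id)
  have : {x : X | IsTop n x} = (fun x : X => (x.1 n, x.2 n)) ⁻¹' {(1, 1)} := by
    ext x; simp [IsTop]
  rw [this]
  exact h (measurableSet_singleton _)

lemma measurable_J (n : ℕ) : Measurable (J n) :=
  measurable_find _ fun j => (MeasurableSet.const _).inter (measurableSet_isTop j).compl

/-- The data that determine by which translation `odo 0` moves `x`: the place where the carry stops
and the sum of the bits of the digit there. -/
def code (x : X) : ℕ × ZMod 2 := (J 0 x, x.1 (J 0 x) + x.2 (J 0 x))

lemma measurable_code : Measurable code := by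
  refine (measurable_J 0).prodMk ?_
  have := measurable_digits.comp ((measurable_J 0).prodMk measurable_id)
  exact (measurable_of_countable (fun p : ZMod 2 × ZMod 2 => p.1 + p.2)).comp this

lemma odo_eq_add (x : X) : odo 0 x = x + step 0 (code x).1 (code x).2 := rfl

lemma measurable_odo : Measurable (odo 0) := by
  have h : Measurable (fun x : X => step 0 (code x).1 (code x).2) :=
    (measurable_of_countable (fun p : ℕ × ZMod 2 => step 0 p.1 p.2)).comp measurable_code
  exact measurable_id.add h

lemma measurable_reflect : Measurable reflect :=
  (measurable_fst.add_const 1).prodMk measurable_snd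

/-- The adding machine on `X`. -/
noncomputable def T : X ≃ᵐ X where
  toFun := odo 0
  invFun x := reflect (odo 0 (reflect x))
  left_inv := reflect_odo_reflect_odo
  right_inv := odo_reflect_odo_reflect
  measurable_toFun := measurable_odo
  measurable_invFun := measurable_reflect.comp (measurable_odo.comp measurable_reflect)

/-! ### The invariant measure -/

/-- Haar measure on `X`, as the product of Haar measure with counting measure. -/
noncomputable def μ : Measure X := (Measure.addHaar : Measure C).prod Measure.count

instance : (Measure.count : Measure S).IsAddHaarMeasure where
  map_add_left_eq_self g := by
    refine Measure.ext fun A hA => ?_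
    rw [Measure.map_apply (measurable_of_countable _) hA]
    rw [← Measure.count_injective_image (add_right_injective g),
      image_preimage_eq _ (add_left_surjective g)]
  lt_top_of_isCompact K hK := by
    exact Measure.count_apply_lt_top.2 hK.finite_of_discrete
  open_pos U _ hU := by
    simpa [Measure.count_eq_zero_iff] using hU.ne_empty

instance : μ.IsAddHaarMeasure := Measure.prod.instIsAddHaarMeasure _ _

instance : SigmaFinite μ := inferInstanceAs (SigmaFinite (Measure.prod _ _))

lemma tendsto_single (a : ZMod 2) :
    Tendsto (fun n => (Pi.single n a : C)) atTop (𝓝 0) := by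
  refine tendsto_pi_nhds.2 fun i => tendsto_const_nhds.congr' ?_
  filter_upwards [eventually_gt_atTop i] with n hn
  simp [hn.ne]

instance : NullSingletonClass μ := by
  have : (𝓝[≠] (0 : C)).NeBot := by
    have h : Tendsto (fun n => (Pi.single n 1 : C)) atTop (𝓝[≠] 0) :=
      tendsto_nhdsWithin_iff.2 ⟨tendsto_single 1, .of_forall fun n => by simp⟩
    exact h.neBot
  exact inferInstanceAs (NullSingletonClass (Measure.prod _ _))

lemma μ_univ : μ univ = ⊤ := by
  rw [μ, ← univ_prod_univ, Measure.prod_prod, Measure.count_apply_infinite infinite_univ]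
  exact ENNReal.mul_top (NeZero.ne _)

/-- `T` is a bijection that on each of the countably many level sets of `code` is a translation. -/
lemma measurePreserving_T : MeasurePreserving T μ μ := by
  refine ⟨T.measurable, Measure.ext fun A hA => ?_⟩
  rw [Measure.map_apply T.measurable hA]
  -- Both sides are cut along the level sets of `code` and along their images under `T`.
  have split : ∀ (e : X → X) (_ : Measurable e) (B : Set X), MeasurableSet B →
      μ B = ∑' p, μ (B ∩ (fun x => code (e x)) ⁻¹' {p}) := by
    intro e he B hB
    rw [← measure_iUnion, ← inter_iUnion, ← preimage_iUnion, iUnion_singleton_eq_range]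
    · simp
    · intro p q hpq
      exact ((Disjoint.preimage _ (by simpa using hpq)).inter_left' _).inter_right' _
    · exact fun p => hB.inter ((measurable_code.comp he) (measurableSet_singleton p))
  rw [split id measurable_id _ (T.measurable hA), split T.symm T.symm.measurable _ hA]
  refine tsum_congr fun p => ?_
  rw [← measure_preimage_add_right μ (step 0 p.1 p.2) (A ∩ _)]
  congr 1
  ext x
  simp only [mem_inter_iff, mem_preimage, mem_singleton_iff, id]
  constructor
  · rintro ⟨h1, rfl⟩
    have : x + step 0 (code x).1 (code x).2 = T x := rfl
    rw [this]
    simpa using h1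
  · rintro ⟨h1, h2⟩
    have : T (T.symm (x + step 0 p.1 p.2)) = x + step 0 p.1 p.2 := T.apply_symm_apply _
    have h3 : T (T.symm (x + step 0 p.1 p.2)) =
        T.symm (x + step 0 p.1 p.2) + step 0 p.1 p.2 := by
      have := odo_eq_add (T.symm (x + step 0 p.1 p.2))
      rw [h2] at this
      exact this
    have h4 : T.symm (x + step 0 p.1 p.2) = x := add_right_cancel (h3.symm.trans this)
    have h5 : T x = x + step 0 p.1 p.2 := by rw [← this, h4]
    exact ⟨h5 ▸ h1, h4 ▸ h2⟩

/-! ### Ergodicity -/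

lemma isErgodicMap_T : IsErgodicMap μ T := by
  intro A hA hTA
  obtain ⟨B, hB, hBA, hTB⟩ :=
    measurePreserving_T.quasiMeasurePreserving.exists_preimage_eq_of_preimage_ae
      hA.nullMeasurableSet (measure_symmDiff_eq_zero_iff.1 hTA)
  suffices h : μ B = 0 ∨ μ Bᶜ = 0 by
    rwa [measure_congr hBA, measure_congr hBA.compl] at h
  have hodo : ∀ n x, odo n x ∈ B ↔ x ∈ B := by
    intro n x
    have h : ∀ m, T^[m] ⁻¹' B = B := fun m => by
      induction m with
      | zero => rfl
      | succ m ih => rw [Function.iterate_succ, preimage_comp, ih, hTB]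
    have := h (4 ^ n)
    rw [show (T : X → X) = odo 0 from rfl, odo_zero_iterate] at this
    rw [← mem_preimage, this]
  have hinc : ∀ n x, inc n x ∈ B ↔ x ∈ B := by
    intro n x
    -- `inc n` agrees with `odo n` unless the digit is `3`; then `x` is reached from `inc n x`, whose
    -- digit is `0`, by three increments without carry.
    by_cases h : IsTop n x
    · have e : ∀ y, ¬ IsTop n y → (inc n y ∈ B ↔ y ∈ B) := fun y hy => by
        rw [← odo_of_not_isTop hy, hodo]
      have q1 : (1 + 1 : ZMod 2) = 0 := rfl
      have h1 := e (inc n x) (by simp [IsTop, inc_fst, inc_snd, h.1, h.2, q1])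
      have h2 := e (inc n (inc n x)) (by simp [IsTop, inc_fst, inc_snd, h.1, h.2, q1])
      have h3 := e (inc n (inc n (inc n x))) (by simp [IsTop, inc_fst, inc_snd, h.1, h.2, q1])
      rw [inc_four] at h3
      rw [h3, h2, h1]
    · rw [← odo_of_not_isTop h, hodo]
  have hdigit : ∀ n (x y : X), (∀ i ≠ n, x.1 i = y.1 i ∧ x.2 i = y.2 i) →
      (x ∈ B ↔ y ∈ B) := by
    intro n x y hxy
    have h0 : y = x ∨ y = inc n x ∨ y = inc n (inc n x) ∨ y = inc n (inc n (inc n x)) := by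
      have key : ∀ z : X, (∀ i ≠ n, x.1 i = z.1 i ∧ x.2 i = z.2 i) → z.1 n = y.1 n →
          z.2 n = y.2 n → y = z := by
        intro z hz h1 h2
        refine X_ext (fun i => ?_) (fun i => ?_) <;> by_cases hi : i = n
        · rw [hi, h1]
        · rw [← (hz i hi).1, ← (hxy i hi).1]
        · rw [hi, h2]
        · rw [← (hz i hi).2, ← (hxy i hi).2]
      have c : ∀ a b c d : ZMod 2, (a = c ∧ b = d) ∨ (1 + b = c ∧ a = d) ∨
          (1 + a = c ∧ 1 + b = d) ∨ (1 + (1 + b) = c ∧ 1 + a = d) := by decide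
      rcases c (x.1 n) (x.2 n) (y.1 n) (y.2 n) with h | h | h | h
      · exact .inl (key _ (fun i hi => ⟨rfl, rfl⟩) h.1 h.2)
      · refine .inr (.inl (key _ (fun i hi => ?_) ?_ ?_)) <;> simp [inc_fst, inc_snd, *]
      · refine .inr (.inr (.inl (key _ (fun i hi => ?_) ?_ ?_))) <;> simp [inc_fst, inc_snd, *]
      · refine .inr (.inr (.inr (key _ (fun i hi => ?_) ?_ ?_))) <;> simp [inc_fst, inc_snd, *]
    rcases h0 with rfl | rfl | rfl | rfl <;> simp [hinc]
  have hfin : ∀ (F : Finset ℕ) (x y : X), (∀ i ∉ F, x.1 i = y.1 i ∧ x.2 i = y.2 i) →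
      (x ∈ B ↔ y ∈ B) := by
    intro F
    induction F using Finset.induction_on with
    | empty =>
      intro x y h
      rw [X_ext (fun i => (h i (by simp)).1) (fun i => (h i (by simp)).2)]
    | insert n F hn ih =>
      intro x y h
      let z : X := (Function.update x.1 n (y.1 n), Finsupp.update x.2 n (y.2 n))
      rw [hdigit n x z (fun i hi => by simp [z, hi])]
      refine ih z y fun i hi => ?_
      by_cases hin : i = n
      · simp [z, hin]
      · simpa [z, hin] using h i (by simp [hin, hi])
  let B₀ : Set C := {c | (c, (0 : S)) ∈ B}
  have hB₀ : MeasurableSet B₀ := hB.preimage (measurable_id.prodMk measurable_const)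
  have hprod : B = B₀ ×ˢ univ := by
    ext x
    simp only [mem_prod, mem_univ, and_true, B₀, mem_ofPred_eq]
    refine hfin x.2.support _ _ fun i hi => ⟨rfl, by simpa using hi⟩
  have hconst : EventuallyConst B₀ (ae (Measure.addHaar : Measure C)) := by
    refine aeconst_of_dense_setOfPred_preimage_vadd_eq (M := C) hB₀.nullMeasurableSet ?_
    intro c
    have ht : Tendsto (fun N i => if i < N then c i else 0) atTop (𝓝 c) := by
      refine tendsto_pi_nhds.2 fun i => tendsto_const_nhds.congr' ?_
      filter_upwards [eventually_gt_atTop i] with n hn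
      simp [hn]
    refine mem_closure_of_tendsto ht (.of_forall fun N => ?_)
    ext d
    refine hfin (Finset.range N) _ _ fun i hi => ⟨?_, rfl⟩
    simp only [Finset.mem_range] at hi
    simp [hi]
  rcases eventuallyConst_set'.1 hconst with h | h
  · left
    rw [hprod, μ, Measure.prod_prod, measure_congr h]
    simp
  · right
    rw [hprod, show (B₀ ×ˢ (univ : Set S))ᶜ = B₀ᶜ ×ˢ univ by ext; simp, μ, Measure.prod_prod,
      measure_congr h.compl]
    simp

/-! ### Conservativity of the Cartesian powers -/

/-- The element of `X^k` by which translation adds `σ i` to the first bit of the `n`-th digit of the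
`i`-th coordinate. -/
noncomputable def flipAt {k : ℕ} (n : ℕ) (σ : Fin k → ZMod 2) : Fin k → X :=
  fun i => (Pi.single n (σ i), 0)

lemma flipAt_add {k : ℕ} (n : ℕ) (σ τ : Fin k → ZMod 2) :
    flipAt n σ + flipAt n τ = flipAt n (σ + τ) := by
  funext i
  simp [flipAt, Pi.single_add]

lemma flipAt_flipAt {k : ℕ} (n : ℕ) (σ : Fin k → ZMod 2) (y : Fin k → X) :
    y + flipAt n σ + flipAt n σ = y := by
  rw [add_assoc, flipAt_add, show σ + σ = 0 from funext fun i => add_self' _]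
  funext i
  simp [flipAt]

lemma tendsto_measure_flipAt {k : ℕ} (σ : Fin k → ZMod 2) {A : Set (Fin k → X)}
    (hA : MeasurableSet A) (hfin : Measure.pi (fun _ : Fin k => μ) A ≠ ⊤) :
    Tendsto (fun n => Measure.pi (fun _ : Fin k => μ)
      (symmDiff ((fun y => y + flipAt n σ) ⁻¹' A) A)) atTop (𝓝 0) := by
  let F : C(Fin k → X, C(Fin k → X, Fin k → X)) :=
    ContinuousMap.curry ⟨fun p => p.2 + p.1, by fun_prop⟩
  have hflipAt : Tendsto (fun n => flipAt n σ) atTop (𝓝 0) :=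
    tendsto_pi_nhds.2 fun i => (tendsto_single (σ i)).prodMk_nhds tendsto_const_nhds
  have hF : Tendsto (fun n => F (flipAt n σ)) atTop (𝓝 (F 0)) := (F.continuous.tendsto 0).comp hflipAt
  have hmp : ∀ v, MeasurePreserving (F v) (Measure.pi fun _ : Fin k => μ)
      (Measure.pi fun _ : Fin k => μ) := fun v => measurePreserving_add_right _ v
  have : (Measure.pi fun _ : Fin k => μ).Regular :=
    Measure.Regular.of_sigmaCompactSpace_of_isLocallyFiniteMeasure _
  have := tendsto_measure_symmDiff_preimage_nhds_zero hF (.of_forall fun n => hmp _) (hmp 0)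
    hA.nullMeasurableSet hfin
  have h0 : F 0 ⁻¹' A = A := by
    ext y
    show y + 0 ∈ A ↔ y ∈ A
    rw [add_zero]
  rw [h0] at this
  exact this

lemma iterate_map {k : ℕ} (m : ℕ) (y : Fin k → X) :
    (fun x : Fin k → X => fun i => T (x i))^[m] y = fun i => T^[m] (y i) := by
  induction m generalizing y with
  | zero => rfl
  | succ m ih => rw [Function.iterate_succ_apply, ih]; rfl

lemma isConservativeMap_pi (k : ℕ) :
    IsConservativeMap (Measure.pi fun _ : Fin k => μ)
      (fun x : Fin k → X => fun i => T (x i)) := by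
  intro A₀ hA₀ hpos₀
  set m := Measure.pi fun _ : Fin k => μ with hm
  obtain ⟨A₁, hA₁, hA₁A₀, hpos₁, hfin₁⟩ : ∃ A₁, MeasurableSet A₁ ∧ A₁ ⊆ A₀ ∧ 0 < m A₁ ∧ m A₁ < ⊤ := by
    obtain ⟨A₁, h1, h2, h3, h4⟩ := Measure.exists_subset_measure_lt_top hA₀ hpos₀
    exact ⟨A₁, h1, h2, h3, h4⟩
  -- On `G n` all digits from place `n` on are `1` or `2`.
  let G : ℕ → Set (Fin k → X) := fun n => {y | ∀ i, ∀ l, n ≤ l → (y i).2 l = 0}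
  have hGm : ∀ n, MeasurableSet (G n) := fun n => by
    have : G n = ⋂ i : Fin k, (fun y => (y i).2) ⁻¹' {s : S | ∀ l, n ≤ l → s l = 0} := by
      ext y; simp [G]
    rw [this]
    exact MeasurableSet.iInter fun i =>
      (measurable_snd.comp (measurable_pi_apply i)) (MeasurableSet.of_discrete)
  have hGU : ⋃ n, G n = univ := by
    refine eq_univ_of_forall fun y => mem_iUnion.2 ?_
    refine ⟨(Finset.univ.sup fun i => (y i).2.support.sup id) + 1, fun i l hl => ?_⟩
    by_contra h
    have h1 : l ≤ (y i).2.support.sup id := Finset.le_sup (f := id) (Finsupp.mem_support_iff.2 h)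
    have h2 := Finset.le_sup (f := fun i => (y i).2.support.sup id) (Finset.mem_univ i)
    omega
  obtain ⟨n₀, hn₀⟩ : ∃ n, 0 < m (A₁ ∩ G n) := by
    by_contra! h
    have : m (A₁ ∩ ⋃ n, G n) = 0 := by
      rw [inter_iUnion]
      exact measure_iUnion_null fun n => nonpos_iff_eq_zero.1 (h n)
    rw [hGU, inter_univ] at this
    exact hpos₁.ne' this
  set A := A₁ ∩ G n₀ with hAdef
  have hA : MeasurableSet A := hA₁.inter (hGm n₀)
  have hAfin : m A ≠ ⊤ := ((measure_mono inter_subset_left).trans_lt hfin₁).ne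
  have hlim : Tendsto (fun n => ∑ σ : Fin k → ZMod 2,
      m (symmDiff ((fun y => y + flipAt n σ) ⁻¹' A) A)) atTop (𝓝 0) := by
    simpa using tendsto_finsetSum Finset.univ fun σ _ => tendsto_measure_flipAt σ hA hAfin
  obtain ⟨n, hsum, hn⟩ := ((hlim.eventually_lt_const hn₀).and (eventually_ge_atTop n₀)).exists
  -- The points that every pattern of flips at place `n` sends into `A`.
  let B : Set (Fin k → X) := ⋂ σ : Fin k → ZMod 2, (fun y => y + flipAt n σ) ⁻¹' A
  have hB : 0 < m (A ∩ B) := by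
    by_contra! h
    have hcov : A ⊆ (A ∩ B) ∪ ⋃ σ : Fin k → ZMod 2, symmDiff ((fun y => y + flipAt n σ) ⁻¹' A) A := by
      intro y hy
      by_cases hyB : y ∈ B
      · exact .inl ⟨hy, hyB⟩
      · obtain ⟨σ, hσ⟩ := by simpa only [B, mem_iInter, not_forall] using hyB
        exact .inr (mem_iUnion.2 ⟨σ, .inr ⟨hy, hσ⟩⟩)
    have := calc m A ≤ _ := measure_mono hcov
      _ ≤ _ := measure_union_le _ _
      _ ≤ 0 + ∑ σ : Fin k → ZMod 2, m (symmDiff ((fun y => y + flipAt n σ) ⁻¹' A) A) :=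
        add_le_add h (measure_iUnion_fintype_le _ _)
    rw [zero_add] at this
    exact absurd hsum this.not_gt
  obtain ⟨σ, hσ⟩ : ∃ σ : Fin k → ZMod 2, 0 < m ((A ∩ B) ∩ {y | ∀ i, (y i).1 n = σ i}) := by
    by_contra! h
    have : m (A ∩ B) ≤ 0 := by
      calc m (A ∩ B) ≤ m (⋃ σ : Fin k → ZMod 2, (A ∩ B) ∩ {y | ∀ i, (y i).1 n = σ i}) :=
            measure_mono fun y hy => mem_iUnion.2 ⟨fun i => (y i).1 n, hy, fun i => rfl⟩
        _ = 0 := measure_iUnion_null fun σ => nonpos_iff_eq_zero.1 (h σ)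
        _ ≤ 0 := le_rfl
    exact absurd hB this.not_gt
  refine ⟨4 ^ n, by positivity, ?_⟩
  -- Translating by `flipAt n σ` makes all the `n`-th digits equal to `1`.
  rw [← measure_preimage_add_right m (flipAt n σ)] at hσ
  refine hσ.trans_le (measure_mono ?_)
  rintro y ⟨⟨hyA, hyB⟩, hyσ⟩
  have hB' : ∀ τ : Fin k → ZMod 2, y + flipAt n σ + flipAt n τ ∈ A := fun τ => mem_iInter.1 hyB τ
  have hy : y ∈ A := by simpa [flipAt_flipAt] using hB' σ
  have hy' : y + flipAt n 1 ∈ A := by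
    have := hB' (σ + 1)
    rwa [← flipAt_add, ← add_assoc, flipAt_flipAt] at this
  refine ⟨hA₁A₀ ?_, hA₁A₀ hy.1⟩
  convert hy'.1 using 1
  rw [iterate_map]
  funext i
  have hs : (y i).2 n = 0 := hy.2 i n hn
  have hc : (y i).1 n = 0 := by
    have := hyσ i
    simpa [flipAt] using this
  rw [show (T : X → X) = odo 0 from rfl, odo_zero_iterate,
    odo_of_not_isTop (fun h => by simpa [hs] using h.2)]
  refine X_ext (fun l => ?_) (fun l => ?_)
  · rw [inc_fst]
    by_cases hl : l = n
    · subst hl; simp [flipAt, hs, hc]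
    · simp [flipAt, hl]
  · rw [inc_snd]
    by_cases hl : l = n
    · subst hl; simp [flipAt, hs, hc]
    · simp [flipAt, hl]

lemma isConservativeMap_T : IsConservativeMap μ T := by
  intro A hA hpos
  have hmp := measurePreserving_funUnique μ (Fin 1)
  have hA' : MeasurableSet ((fun y : Fin 1 → X => y 0) ⁻¹' A) := measurable_pi_apply 0 hA
  have hval : ∀ B : Set X, MeasurableSet B →
      Measure.pi (fun _ : Fin 1 => μ) ((fun y : Fin 1 → X => y 0) ⁻¹' B) = μ B := fun B hB =>
    hmp.measure_preimage hB.nullMeasurableSet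
  obtain ⟨n, hn, h⟩ := isConservativeMap_pi 1 _ hA' (by rwa [hval A hA])
  refine ⟨n, hn, ?_⟩
  rw [← hval _ (((T.measurable.iterate n) hA).inter hA)]
  convert h using 2
  ext y
  simp [iterate_map]

/-! ### Failure of ergodicity of the Cartesian powers -/

/-- The sum of the two bits is `1` for the digits `0`, `2` and `0` for the digits `1`, `3`, so it records
the parity of a digit. -/
lemma parity_odo (x : X) : (odo 0 x).1 0 + (odo 0 x).2 0 = x.1 0 + x.2 0 + 1 := by
  rw [odo_fst, odo_snd]
  split_ifs with h1 h2
  · ring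
  · ring
  · omega

lemma not_isErgodicMap_pi (k : ℕ) (hk : 2 ≤ k) :
    ¬ IsErgodicMap (Measure.pi fun _ : Fin k => μ)
      (fun x : Fin k → X => fun i => T (x i)) := by
  intro h
  let a : Fin k := ⟨0, by omega⟩
  let b : Fin k := ⟨1, by omega⟩
  have hab : a ≠ b := by simp [a, b]
  let p : X → ZMod 2 := fun x => x.1 0 + x.2 0
  have hp : Continuous p := by
    have h1 : Continuous (fun x : X => x.1 0) := (continuous_apply 0).comp continuous_fst
    have h2 : Continuous (fun s : S => s 0) := continuous_of_discreteTopology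
    exact h1.add (h2.comp continuous_snd)
  let q : (Fin k → X) → ZMod 2 := fun y => p (y a) + p (y b)
  have hq : Continuous q :=
    (hp.comp (continuous_apply a)).add (hp.comp (continuous_apply b))
  let E : Set (Fin k → X) := q ⁻¹' {0}
  have hEo : IsOpen E := (isOpen_discrete _).preimage hq
  have hEo' : IsOpen Eᶜ := (isOpen_discrete ({0}ᶜ : Set (ZMod 2))).preimage hq
  have hinv : (fun x : Fin k → X => fun i => T (x i)) ⁻¹' E = E := by
    ext y
    have ha : p (T (y a)) = p (y a) + 1 := parity_odo _
    have hb : p (T (y b)) = p (y b) + 1 := parity_odo _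
    simp only [E, q, mem_preimage, mem_singleton_iff, ha, hb]
    generalize p (y a) = u
    generalize p (y b) = v
    revert u v; decide
  have hE : E.Nonempty := ⟨0, by simp [E, q, p]⟩
  have hE' : Eᶜ.Nonempty :=
    ⟨fun i => if i = a then (Pi.single 0 1, 0) else 0, by simp [E, q, p, hab.symm]⟩
  rcases h E hEo.measurableSet (by rw [hinv]; simp) with h0 | h0
  · exact (hEo.measure_pos _ hE).ne' h0
  · exact (hEo'.measure_pos _ hE').ne' h0

end GrayOdometer

theorem stmt11 (k : ℕ) (hk : 2 ≤ k) :
    ∃ (X : Type) (_ : MeasurableSpace X) (_ : StandardBorelSpace X)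
      (μ : Measure X) (_ : NoAtoms μ) (_ : SigmaFinite μ) (T : X ≃ᵐ X),
      μ Set.univ = ⊤ ∧ MeasurePreserving T μ μ ∧
      IsConservativeMap (Measure.pi fun _ : Fin k => μ)
        (fun x : Fin k → X => fun i => T (x i)) ∧
      ¬ IsErgodicMap (Measure.pi fun _ : Fin k => μ)
        (fun x : Fin k → X => fun i => T (x i)) ∧
      IsConservativeMap μ ⇑T ∧ IsErgodicMap μ ⇑T := by
  exact ⟨GrayOdometer.X, inferInstance, inferInstance, GrayOdometer.μ,
    (inferInstance : NullSingletonClass GrayOdometer.μ), inferInstance,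
    GrayOdometer.T, GrayOdometer.μ_univ, GrayOdometer.measurePreserving_T,
    GrayOdometer.isConservativeMap_pi k, GrayOdometer.not_isErgodicMap_pi k hk,
    GrayOdometer.isConservativeMap_T, GrayOdometer.isErgodicMap_T⟩
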